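/- arXiv:0804.2512 — 2 statements merged into one kernel-verified Lean document; each statement's English description precedes it below -/
import Mathlib

section
/- For every positive integer n and every real s > 0, the iterated integral over the hyperplane H_n = {x ∈ ℝ^n : x_1 + ... + x_n = 0} of exp(-λ(e^{x_1} + ... + e^{x_n})), multiplied by n λ^{ns-1} and integrated over λ ∈ (0,∞), equals Γ(s)^n. Equivalently, with F_n(λ) = ∫_{H_n} exp(-λ Σ_k e^{x_k}) dx (integrating over the (n-1)-dimensional Lebesgue measure on H_n), one has ∫_0^∞ n F_n(λ) λ^{ns-1} dλ = Γ(s)^n. -/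
open MeasureTheory Real

/-- The Mellin–Barnes function `F n λ`: the integral over the hyperplane
`{x ∈ ℝⁿ : Σ x_k = 0}` of `exp (-λ Σ exp (x_k))`, parametrized by the
first `n - 1` coordinates. -/
noncomputable def MellinBarnesF (n : ℕ) (lam : ℝ) : ℝ :=
  ∫ x : Fin (n - 1) → ℝ,
    Real.exp (-lam * ((∑ k, Real.exp (x k)) + Real.exp (-∑ k, x k)))

/-!
In the logarithmic coordinate, `∏ a_k` for Mellin transforms `a_k` of `f_k` at the same point `s`
is the integral over `ℝⁿ` of `exp (s Σ y_k) ∏ f_k (exp y_k)`. Write `y = z + t (1, …, 1)` with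
`Σ z_k = 0`. The first exponential becomes `exp (n s t)`, so the integral over `t = log λ` is a
Mellin transform at `n s`. Since `t` is the mean of the `y_k` and not their sum, the change of
variables contributes the factor `n`. Taking `f_k λ = exp (-λ)` gives `Γ(s)ⁿ`.
-/

section ExpSubstitution

variable {E : Type*} [NormedAddCommGroup E]

theorem integrable_exp_smul_comp_exp_iff [NormedSpace ℝ E] (g : ℝ → E) :
    Integrable (fun t : ℝ ↦ Real.exp t • g (Real.exp t)) ↔ IntegrableOn g (Set.Ioi 0) := by
  rw [← Real.range_exp, ← Set.image_univ]
  simpa [abs_of_pos (Real.exp_pos _)] using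
    (integrableOn_image_iff_integrableOn_abs_deriv_smul MeasurableSet.univ
      (fun x _ ↦ (Real.hasDerivAt_exp x).hasDerivWithinAt) Real.exp_injective.injOn g).symm

theorem integral_exp_smul_comp_exp [NormedSpace ℝ E] (g : ℝ → E) :
    ∫ t : ℝ, Real.exp t • g (Real.exp t) = ∫ x in Set.Ioi 0, g x := by
  rw [← Real.range_exp, ← Set.image_univ]
  simpa [abs_of_pos (Real.exp_pos _)] using
    (integral_image_eq_integral_abs_deriv_smul MeasurableSet.univ
      (fun x _ ↦ (Real.hasDerivAt_exp x).hasDerivWithinAt) Real.exp_injective.injOn g).symm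

theorem hasMellin_iff_integral_cexp_smul_comp_exp [NormedSpace ℂ E] {f : ℝ → E} {s : ℂ} {a : E} :
    HasMellin f s a ↔ Integrable (fun t : ℝ ↦ Complex.exp (s * t) • f (Real.exp t)) ∧
      ∫ t : ℝ, Complex.exp (s * t) • f (Real.exp t) = a := by
  have jacobian_smul (t : ℝ) : Real.exp t • (Real.exp t : ℂ) ^ (s - 1) • f (Real.exp t) =
      Complex.exp (s * t) • f (Real.exp t) := by
    rw [← Complex.coe_smul, smul_smul,
      Complex.cpow_def_of_ne_zero (Complex.ofReal_ne_zero.2 (Real.exp_ne_zero t)),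
      ← Complex.ofReal_log (Real.exp_pos t).le, Real.log_exp, Complex.ofReal_exp, ← Complex.exp_add]
    ring_nf
  rw [HasMellin, MellinConvergent, mellin, ← integrable_exp_smul_comp_exp_iff,
    ← integral_exp_smul_comp_exp]
  simp only [jacobian_smul]

end ExpSubstitution

theorem setIntegral_mul_rpow_sub_one_of_hasMellin {f : ℝ → ℝ} {s a : ℝ}
    (hf : HasMellin (fun x ↦ (f x : ℂ)) s a) :
    ∫ x in Set.Ioi 0, f x * x ^ (s - 1) = a := by
  rw [← Complex.ofReal_inj, ← hf.2, mellin, ← integral_complex_ofReal]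
  refine setIntegral_congr_fun measurableSet_Ioi fun x (hx : 0 < x) ↦ ?_
  push_cast [Complex.ofReal_cpow hx.le]
  exact mul_comm _ _

theorem hasMellin_exp_neg {s : ℂ} (hs : 0 < s.re) :
    HasMellin (fun x ↦ (Real.exp (-x) : ℂ)) s (Complex.Gamma s) := by
  constructor
  · simpa [MellinConvergent, mul_comm] using Complex.GammaIntegral_convergent hs
  · rw [Complex.Gamma_eq_integral hs, Complex.GammaIntegral_eq_mellin]

section SumFibration

variable {m : ℕ}

/-- The point of `ℝᵐ⁺¹` on the hyperplane `{y : Σ y_k = u}` whose first `m` coordinates are `x`.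
It parametrizes that hyperplane in the same way as the definition of `MellinBarnesF` does
for `u = 0`. -/
def snocWithSum (u : ℝ) (x : Fin m → ℝ) : Fin (m + 1) → ℝ :=
  Fin.snoc x (u - ∑ k, x k)

theorem sum_snocWithSum (u : ℝ) (x : Fin m → ℝ) : ∑ k, snocWithSum u x k = u := by
  simp [snocWithSum, Fin.sum_univ_castSucc]

theorem snocWithSum_zero_add_const (t : ℝ) (x : Fin m → ℝ) :
    (fun k ↦ snocWithSum 0 x k + t) = snocWithSum ((m + 1) * t) (fun k ↦ x k + t) := by
  ext k
  refine Fin.lastCases ?_ (fun i ↦ ?_) k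
  · simp only [snocWithSum, Fin.snoc_last, Finset.sum_add_distrib, Finset.sum_const,
      Finset.card_univ, Fintype.card_fin, nsmul_eq_mul]
    ring
  · simp [snocWithSum]

theorem measurePreserving_snocWithSum :
    MeasurePreserving (fun p : (Fin m → ℝ) × ℝ ↦ snocWithSum p.2 p.1) := by
  have shear : MeasurePreserving (fun p : (Fin m → ℝ) × ℝ ↦ (p.1, p.2 - ∑ k, p.1 k)) :=
    (MeasurePreserving.id volume).skew_product
      (g := fun (x : Fin m → ℝ) (u : ℝ) ↦ u - ∑ k, x k) (by unfold Function.uncurry; fun_prop)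
      (.of_forall fun x ↦ map_sub_right_eq_self volume (∑ k, x k))
  have insert_last :=
    (volume_preserving_piFinSuccAbove (fun _ : Fin (m + 1) ↦ ℝ) (Fin.last m)).symm
  convert insert_last.comp (Measure.measurePreserving_swap.comp shear) using 2 with p
  simp [snocWithSum, MeasurableEquiv.piFinSuccAbove_symm_apply, Fin.insertNthEquiv]

variable {E : Type*} [NormedAddCommGroup E] [NormedSpace ℝ E] {G : (Fin (m + 1) → ℝ) → E}

theorem integrable_integral_snocWithSum (hG : Integrable G) :
    Integrable fun u ↦ ∫ x : Fin m → ℝ, G (snocWithSum u x) :=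
  (measurePreserving_snocWithSum.integrable_comp_of_integrable hG).integral_prod_right

theorem integral_eq_integral_integral_snocWithSum (hG : Integrable G) :
    ∫ y, G y = ∫ u, ∫ x : Fin m → ℝ, G (snocWithSum u x) := by
  have hmp := measurePreserving_snocWithSum (m := m)
  rw [← hmp.map_eq, integral_map hmp.aemeasurable (hmp.map_eq ▸ hG.aestronglyMeasurable)]
  exact integral_prod_symm _ (hmp.integrable_comp_of_integrable hG)

theorem integral_snocWithSum_zero_add_const (G : (Fin (m + 1) → ℝ) → E) (t : ℝ) :
    ∫ x : Fin m → ℝ, G (fun k ↦ snocWithSum 0 x k + t) =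
      ∫ x : Fin m → ℝ, G (snocWithSum ((m + 1) * t) x) := by
  simp only [snocWithSum_zero_add_const]
  exact integral_add_right_eq_self (fun x ↦ G (snocWithSum ((m + 1) * t) x)) (fun _ ↦ t)

theorem integrable_integral_snocWithSum_zero_add_const (hG : Integrable G) :
    Integrable fun t ↦ ∫ x : Fin m → ℝ, G (fun k ↦ snocWithSum 0 x k + t) := by
  simp only [integral_snocWithSum_zero_add_const]
  exact (integrable_integral_snocWithSum hG).comp_mul_left' m.cast_add_one_ne_zero

theorem integral_eq_smul_integral_integral_snocWithSum_zero_add_const (hG : Integrable G) :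
    ∫ y, G y =
      ((m : ℝ) + 1) • ∫ t, ∫ x : Fin m → ℝ, G (fun k ↦ snocWithSum 0 x k + t) := by
  have hm : (0 : ℝ) < m + 1 := m.cast_add_one_pos
  simp only [integral_snocWithSum_zero_add_const]
  rw [Measure.integral_comp_mul_left (fun u ↦ ∫ x : Fin m → ℝ, G (snocWithSum u x)),
    abs_of_pos (inv_pos.2 hm), smul_inv_smul₀ hm.ne',
    integral_eq_integral_integral_snocWithSum hG]

end SumFibration

theorem MellinBarnesF_succ (m : ℕ) (lam : ℝ) :
    MellinBarnesF (m + 1) lam =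
      ∫ x : Fin m → ℝ, ∏ k, Real.exp (-(lam * Real.exp (snocWithSum 0 x k))) := by
  simp only [← Real.exp_sum, ← Finset.mul_sum, ← neg_mul,
    Fin.sum_univ_castSucc, snocWithSum, Fin.snoc_castSucc, Fin.snoc_last, zero_sub]
  rfl

theorem prod_cexp_smul_comp_exp_snocWithSum_zero_add_const {m : ℕ} (f : Fin (m + 1) → ℝ → ℂ)
    (s : ℂ) (t : ℝ) (x : Fin m → ℝ) :
    ∏ k, Complex.exp (s * (snocWithSum 0 x k + t : ℝ)) • f k (Real.exp (snocWithSum 0 x k + t)) =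
      Complex.exp ((m + 1) * s * t) • ∏ k, f k (Real.exp t * Real.exp (snocWithSum 0 x k)) := by
  have exponent_sum : ∑ k, s * (snocWithSum 0 x k + t : ℝ) = (m + 1) * s * t := by
    rw [← Finset.mul_sum, ← Complex.ofReal_sum, Finset.sum_add_distrib, sum_snocWithSum,
      Finset.sum_const, Finset.card_univ, Fintype.card_fin, nsmul_eq_mul]
    push_cast
    ring
  simp only [smul_eq_mul, Finset.prod_mul_distrib, ← Complex.exp_sum, exponent_sum, Real.exp_add,
    mul_comm (Real.exp t)]

theorem hasMellin_integral_prod_snocWithSum_zero {m : ℕ} {f : Fin (m + 1) → ℝ → ℂ} {s : ℂ}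
    {a : Fin (m + 1) → ℂ} (hf : ∀ k, HasMellin (f k) s (a k)) :
    HasMellin
      (fun lam ↦ ((m : ℝ) + 1) •
        ∫ x : Fin m → ℝ, ∏ k, f k (lam * Real.exp (snocWithSum 0 x k)))
      ((m + 1) * s) (∏ k, a k) := by
  simp only [hasMellin_iff_integral_cexp_smul_comp_exp] at hf
  have integrable_prod := Integrable.fintype_prod (𝕜 := ℂ) fun k ↦ (hf k).1
  have fiber_integral (t : ℝ) :
      ∫ x : Fin m → ℝ, ∏ k, Complex.exp (s * (snocWithSum 0 x k + t : ℝ)) •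
          f k (Real.exp (snocWithSum 0 x k + t)) =
        Complex.exp ((m + 1) * s * t) •
          ∫ x : Fin m → ℝ, ∏ k, f k (Real.exp t * Real.exp (snocWithSum 0 x k)) := by
    simp only [prod_cexp_smul_comp_exp_snocWithSum_zero_add_const, integral_smul]
  have integrable_fiber := integrable_integral_snocWithSum_zero_add_const integrable_prod
  have integral_fiber :=
    integral_eq_smul_integral_integral_snocWithSum_zero_add_const integrable_prod
  rw [integral_fintype_prod_volume_eq_prod
    (fun k t ↦ Complex.exp (s * (t : ℝ)) • f k (Real.exp t))] at integral_fiber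
  simp only [fiber_integral, (hf _).2] at integrable_fiber integral_fiber
  simp only [hasMellin_iff_integral_cexp_smul_comp_exp, smul_comm _ ((m : ℝ) + 1), integral_smul]
  exact ⟨integrable_fiber.smul ((m : ℝ) + 1), integral_fiber.symm⟩

theorem mellin_of_F_eq_Gamma_pow_general (n : ℕ) (hn : 1 ≤ n) (s : ℂ) (hs : 0 < s.re) :
    HasMellin (fun lam ↦ ((n * MellinBarnesF n lam : ℝ) : ℂ)) (n * s) (Complex.Gamma s ^ n) := by
  obtain ⟨m, rfl⟩ := Nat.exists_eq_add_of_le' hn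
  simpa [MellinBarnesF_succ, ← integral_complex_ofReal] using
    hasMellin_integral_prod_snocWithSum_zero fun _ : Fin (m + 1) ↦ hasMellin_exp_neg hs

theorem mellin_of_F_eq_Gamma_pow (n : ℕ) (hn : 1 ≤ n) (s : ℝ) (hs : 0 < s) :
    ∫ lam in Set.Ioi (0 : ℝ),
      (n : ℝ) * MellinBarnesF n lam * lam ^ ((n : ℝ) * s - 1) =
    (Real.Gamma s) ^ n :=
  setIntegral_mul_rpow_sub_one_of_hasMellin <| by
    simpa [Complex.Gamma_ofReal] using mellin_of_F_eq_Gamma_pow_general n hn s hs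
end

section
/- Let f = (f_1, ..., f_n) be a vector of positive reals and let ρ_n(f) = (∏_{k=1}^n f_k)^{1/n}. Then the Laplace transform D_n(f) = ∫_{M_{n,r}} exp(-Σ_{k=1}^n f_k y_k) dm_n(y) of the invariant measure m_n on the hypersphere M_{n,r} = {y ∈ ℝ_{>0}^n : ∏ y_k = r^n} satisfies D_n(f) = F_n(ρ_n(f) · r), i.e. D_n depends on f only through the geometric mean ρ_n(f). -/
open MeasureTheory Real

/-- The point of the hypersphere `M_{n,r} = {y : ∏ y_k = rⁿ, y_k > 0}`
corresponding to the coordinates `x ∈ ℝ^{n-1}` on the hyperplane `{Σ x_k = 0}`: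
`y_k = r·exp(x_k)` for `k < n - 1` and `y_{n-1} = r·exp(-Σ x_j)`. -/
noncomputable def hypersphereCoord (n : ℕ) (r : ℝ) (x : Fin (n - 1) → ℝ)
    (k : Fin n) : ℝ :=
  if h : (k : ℕ) < n - 1 then r * Real.exp (x ⟨k, h⟩)
  else r * Real.exp (-∑ j, x j)

/-- The Laplace transform of the invariant measure `m_n` on `M_{n,r}`:
`D_n(f) = ∫_{M_{n,r}} exp(-Σ f_k y_k) dm_n(y)`, written in the coordinates
`x ∈ ℝ^{n-1}` in which `m_n` is Lebesgue measure on `{Σ x_k = 0}`. -/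
noncomputable def laplaceD (n : ℕ) (r : ℝ) (f : Fin n → ℝ) : ℝ :=
  ∫ x : Fin (n - 1) → ℝ,
    Real.exp (-∑ k : Fin n, f k * hypersphereCoord n r x k)

/-! In the coordinates `x`, multiplying the point of the hypersphere by a positive vector `c` with
`∏ k, c k = 1` is a translation, so it preserves Lebesgue measure. Hence `D_n(f)` is unchanged when
`f` is replaced by `c * f`. Since the entries of `f / ρ_n(f)` multiply to `1`, this replaces `f` by
the constant vector `ρ_n(f)`, for which `D_n` is `F_n` by inspection. -/

theorem prod_div_geom_mean {ι : Type*} [Fintype ι] [Nonempty ι] {f : ι → ℝ} (hf : 0 < ∏ k, f k) :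
    ∏ k, f k / (∏ j, f j) ^ ((1 : ℝ) / Fintype.card ι) = 1 := by
  rw [Finset.prod_div_distrib, Finset.prod_const, Finset.card_univ, one_div,
    Real.rpow_inv_natCast_pow hf.le Fintype.card_ne_zero, div_self hf.ne']

@[simp]
theorem hypersphereCoord_castSucc {m : ℕ} (r : ℝ) (x : Fin m → ℝ) (k : Fin m) :
    hypersphereCoord (m + 1) r x k.castSucc = r * exp (x k) :=
  dif_pos k.isLt

@[simp]
theorem hypersphereCoord_last {m : ℕ} (r : ℝ) (x : Fin m → ℝ) :
    hypersphereCoord (m + 1) r x (Fin.last m) = r * exp (-∑ j, x j) :=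
  dif_neg (lt_irrefl m)

theorem sum_hypersphereCoord {n : ℕ} (hn : 1 ≤ n) (r : ℝ) (x : Fin (n - 1) → ℝ) :
    ∑ k, hypersphereCoord n r x k = r * ((∑ k, exp (x k)) + exp (-∑ k, x k)) := by
  obtain ⟨m, rfl⟩ := Nat.exists_eq_add_of_le' hn
  rw [Fin.sum_univ_castSucc, mul_add, Finset.mul_sum]
  simp only [hypersphereCoord_castSucc, hypersphereCoord_last]
  rfl

theorem laplaceD_const {n : ℕ} (hn : 1 ≤ n) (r a : ℝ) :
    laplaceD n r (fun _ ↦ a) = MellinBarnesF n (a * r) := by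
  simp only [laplaceD, MellinBarnesF, ← Finset.mul_sum, sum_hypersphereCoord hn, neg_mul,
    mul_assoc]

section Invariance

variable {n : ℕ} {c : Fin n → ℝ}

theorem hypersphereCoord_add_log (hc : ∀ k, 0 < c k) (hprod : ∏ k, c k = 1) (r : ℝ)
    (x : Fin (n - 1) → ℝ) :
    hypersphereCoord n r (x + fun j ↦ log (c (j.castLE (n.sub_le 1)))) =
      c * hypersphereCoord n r x := by
  cases n with
  | zero => exact Subsingleton.elim _ _
  | succ m =>
    have sum_log : ∑ j : Fin m, log (c j.castSucc) + log (c (Fin.last m)) = 0 := by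
      rw [← Fin.sum_univ_castSucc fun k ↦ log (c k), ← log_prod fun k _ ↦ (hc k).ne', hprod,
        log_one]
    change Fin m → ℝ at x
    change hypersphereCoord (m + 1) r (fun j : Fin m ↦ x j + log (c j.castSucc)) = _
    ext k
    induction k using Fin.lastCases with
    | cast j =>
      rw [Pi.mul_apply, hypersphereCoord_castSucc, hypersphereCoord_castSucc, exp_add,
        exp_log (hc _)]
      ring
    | last =>
      have neg_sum : -∑ j, (x j + log (c j.castSucc)) = -∑ j, x j + log (c (Fin.last m)) := by
        rw [Finset.sum_add_distrib]
        linarith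
      rw [Pi.mul_apply, hypersphereCoord_last, hypersphereCoord_last, neg_sum, exp_add,
        exp_log (hc _)]
      ring

theorem integral_mul_hypersphereCoord {E : Type*} [NormedAddCommGroup E] [NormedSpace ℝ E]
    (hc : ∀ k, 0 < c k) (hprod : ∏ k, c k = 1) (r : ℝ) (g : (Fin n → ℝ) → E) :
    ∫ x, g (c * hypersphereCoord n r x) = ∫ x, g (hypersphereCoord n r x) := by
  simp only [← hypersphereCoord_add_log hc hprod r]
  exact integral_add_right_eq_self (fun x ↦ g (hypersphereCoord n r x)) _

theorem laplaceD_mul_of_prod_eq_one (hc : ∀ k, 0 < c k) (hprod : ∏ k, c k = 1) (r : ℝ)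
    (f : Fin n → ℝ) :
    laplaceD n r (c * f) = laplaceD n r f := by
  have h := integral_mul_hypersphereCoord hc hprod r fun y ↦ exp (-∑ k, f k * y k)
  simpa only [laplaceD, Pi.mul_apply, mul_left_comm, mul_assoc] using h

end Invariance

theorem laplaceD_eq_F_geom_mean (n : ℕ) (hn : 1 ≤ n) (r : ℝ) (hr : 0 < r)
    (f : Fin n → ℝ) (hf : ∀ k, 0 < f k) :
    laplaceD n r f = MellinBarnesF n ((∏ k, f k) ^ ((1 : ℝ) / n) * r) := by
  have : NeZero n := ⟨Nat.one_le_iff_ne_zero.mp hn⟩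
  have prod_pos : 0 < ∏ k, f k := Finset.prod_pos fun k _ ↦ hf k
  set ρ := (∏ k, f k) ^ ((1 : ℝ) / n)
  have ρ_pos : 0 < ρ := rpow_pos_of_pos prod_pos _
  have prod_div : ∏ k, f k / ρ = 1 := by
    simpa only [Fintype.card_fin] using prod_div_geom_mean prod_pos
  calc
    laplaceD n r f = laplaceD n r ((fun k ↦ f k / ρ) * fun _ ↦ ρ) := by
      congr 1
      ext k
      exact (div_mul_cancel₀ (f k) ρ_pos.ne').symm
    _ = laplaceD n r fun _ ↦ ρ :=
      laplaceD_mul_of_prod_eq_one (fun k ↦ div_pos (hf k) ρ_pos) prod_div r _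
    _ = MellinBarnesF n (ρ * r) := laplaceD_const hn r ρ
end
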